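/- Let Σ ∈ S^p and 0 < ψ < ‖poffdiag(Σ)‖_F². If (L̂, D̂) is a global minimizer of the constrained problem: minimize ‖L‖_* over L ∈ S^p_+ and diagonal D subject to ‖Σ − (L+D)‖_F² ≤ ψ, then there exists τ > 0 such that (L̂, D̂) is a global minimizer of F(L,D) = τ‖L‖_* + (1/2)‖Σ − (L+D)‖_F² over L ∈ S^p_+ and diagonal D. -/

import Mathlib

open Matrix MeasureTheory ProbabilityTheory BigOperators

/-- `pdiag M`: the matrix `M` with all off-diagonal entries set to zero. -/
def pdiag {p : ℕ} (M : Matrix (Fin p) (Fin p) ℝ) : Matrix (Fin p) (Fin p) ℝ :=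
  Matrix.of fun i j => if i = j then M i j else 0

/-- `poffdiag M = M - pdiag M`: the off-diagonal part of `M`. -/
def poffdiag {p : ℕ} (M : Matrix (Fin p) (Fin p) ℝ) : Matrix (Fin p) (Fin p) ℝ :=
  M - pdiag M

/-- Frobenius norm of a real matrix. -/
noncomputable def frobNorm {p q : ℕ} (M : Matrix (Fin p) (Fin q) ℝ) : ℝ :=
  Real.sqrt (∑ i, ∑ j, (M i j) ^ 2)

/-- The singular values of a real matrix (as the square roots of the eigenvalues of `Mᵀ M`,
in no particular order, with multiplicity, padded by zeros). -/
noncomputable def singVals {p q : ℕ} (M : Matrix (Fin p) (Fin q) ℝ) : Fin q → ℝ :=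
  fun i => Real.sqrt ((Matrix.posSemidef_conjTranspose_mul_self M).isHermitian.eigenvalues i)

/-- Nuclear norm: sum of the singular values. -/
noncomputable def nucNorm {p q : ℕ} (M : Matrix (Fin p) (Fin q) ℝ) : ℝ :=
  ∑ i, singVals M i

/-- Spectral (operator) norm: the largest singular value. -/
noncomputable def specNorm {p q : ℕ} (M : Matrix (Fin p) (Fin q) ℝ) : ℝ :=
  ⨆ i, singVals M i

/-- `(2,∞)`-norm: the maximal Euclidean norm of a row. -/
noncomputable def rowNorm {p r : ℕ} (U : Matrix (Fin p) (Fin r) ℝ) : ℝ :=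
  ⨆ i, Real.sqrt (∑ j, (U i j) ^ 2)

/-- `sinΘ` distance between two column-orthonormal matrices, measured in spectral norm:
`‖sinΘ(U, V)‖ = ‖U Uᵀ - V Vᵀ‖`. -/
noncomputable def sinTheta {p r : ℕ} (U V : Matrix (Fin p) (Fin r) ℝ) : ℝ :=
  specNorm (U * Uᵀ - V * Vᵀ)

/-- `eigDesc M k` : the `k`-th largest eigenvalue (1-indexed) of a symmetric matrix `M`. -/
noncomputable def eigDesc {p : ℕ} (M : Matrix (Fin p) (Fin p) ℝ) (k : ℕ) : ℝ :=
  if h : M.IsHermitian then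
    (((List.ofFn h.eigenvalues).insertionSort (· ≥ ·)).getD (k - 1) 0)
  else 0

/-- `svDesc M k` : the `k`-th largest singular value (1-indexed) of `M`. -/
noncomputable def svDesc {p q : ℕ} (M : Matrix (Fin p) (Fin q) ℝ) (k : ℕ) : ℝ :=
  (((List.ofFn (singVals M)).insertionSort (· ≥ ·)).getD (k - 1) 0)

/-- Eigenvalue soft-thresholding operator `D_τ⁺`: for a symmetric matrix
`M = Σᵢ λᵢ uᵢ uᵢᵀ`, `D_τ⁺(M) = Σᵢ max (λᵢ - τ) 0 • uᵢ uᵢᵀ` (junk value `0` otherwise). -/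
noncomputable def softThresh {p : ℕ} (τ : ℝ) (M : Matrix (Fin p) (Fin p) ℝ) :
    Matrix (Fin p) (Fin p) ℝ :=
  if h : M.IsHermitian then
    (h.eigenvectorUnitary : Matrix (Fin p) (Fin p) ℝ) *
      Matrix.diagonal (fun i => max (h.eigenvalues i - τ) 0) *
      (star (h.eigenvectorUnitary : Matrix (Fin p) (Fin p) ℝ))
  else 0

/-- The `p × r` matrix whose columns are (orthonormal) eigenvectors of the symmetric matrix
`M` corresponding to its `r` largest eigenvalues ("first `r` eigenvectors"). -/
noncomputable def topEigenvectors {p : ℕ} (M : Matrix (Fin p) (Fin p) ℝ) (r : ℕ) :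
    Matrix (Fin p) (Fin r) ℝ :=
  if h : M.IsHermitian then
    Matrix.of fun i (j : Fin r) =>
      if hj : (j : ℕ) < p then
        (h.eigenvectorUnitary : Matrix (Fin p) (Fin p) ℝ) i
          ((Tuple.sort h.eigenvalues) (Fin.rev ⟨(j : ℕ), hj⟩))
      else 0
  else 0

/-- The objective function `F(L, D) = τ ‖L‖_* + (1/2) ‖Σ - (L + D)‖_F²`. -/
noncomputable def objF {p : ℕ} (τ : ℝ) (S L D : Matrix (Fin p) (Fin p) ℝ) : ℝ :=
  τ * nucNorm L + (1 / 2) * (frobNorm (S - (L + D))) ^ 2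

/-- `(L, D)` is a global minimizer of the relaxed-MTFA objective `F` over
`L ∈ S^p₊` and diagonal `D`. -/
def IsRMTFAMin {p : ℕ} (τ : ℝ) (S L D : Matrix (Fin p) (Fin p) ℝ) : Prop :=
  L.PosSemidef ∧ D = pdiag D ∧
    ∀ L' D' : Matrix (Fin p) (Fin p) ℝ, L'.PosSemidef → D' = pdiag D' →
      objF τ S L D ≤ objF τ S L' D'

/-!
On the positive semidefinite cone the nuclear norm is the trace, so the constrained problem is a
convex programme with one inequality constraint, and splitting `Σ = (Σ - c I) + c I` gives Slater's
condition. Plot the objective `f` against the constraint function `g` and mark the point `(b, m)`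
given by the constraint level and the optimal value. By convexity the descent from `(b, m)` to an
infeasible point is at most as steep as the descent from a strictly feasible point to `(b, m)`, and
any slope `l ≥ 0` in between is a Lagrange multiplier. If `l` were `0`, then `L̂` would minimize the
nuclear norm over the whole cone, hence vanish, which `ψ < ‖poffdiag Σ‖_F²` excludes; so `τ = l⁻¹`
works.
-/

section LagrangeMultiplier

variable {E : Type*} [AddCommGroup E] [Module ℝ E] {C : Set E} {f g : E → ℝ} {b m : ℝ}

theorem div_le_div_of_convexOn_of_forall_le (hf : ConvexOn ℝ C f) (hg : ConvexOn ℝ C g)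
    (hm : ∀ x ∈ C, g x ≤ b → m ≤ f x) {x y : E} (hx : x ∈ C) (hy : y ∈ C)
    (hgx : b < g x) (hgy : g y < b) :
    (m - f x) / (g x - b) ≤ (f y - m) / (b - g y) := by
  have hu : 0 < b - g y := sub_pos.2 hgy
  have hv : 0 < g x - b := sub_pos.2 hgx
  set u := b - g y with hu_def
  set v := g x - b with hv_def
  have huv : 0 < u + v := add_pos hu hv
  have hsum : u / (u + v) + v / (u + v) = 1 := by rw [← add_div, div_self huv.ne']
  have hu' : 0 ≤ u / (u + v) := by positivity
  have hv' : 0 ≤ v / (u + v) := by positivity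
  -- The weights are the ones for which the average of `g x` and `g y` is exactly `b`.
  have hfeas : g ((u / (u + v)) • x + (v / (u + v)) • y) ≤ b :=
    calc g ((u / (u + v)) • x + (v / (u + v)) • y)
        ≤ u / (u + v) * g x + v / (u + v) * g y := hg.2 hx hy hu' hv' hsum
      _ = b := by
        field_simp
        rw [hu_def, hv_def]
        ring
  have hvalue : m ≤ (u * f x + v * f y) / (u + v) :=
    calc m ≤ f ((u / (u + v)) • x + (v / (u + v)) • y) :=
          hm _ (hf.1 hx hy hu' hv' hsum) hfeas
      _ ≤ u / (u + v) * f x + v / (u + v) * f y := hf.2 hx hy hu' hv' hsum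
      _ = (u * f x + v * f y) / (u + v) := by ring
  rw [le_div_iff₀ huv] at hvalue
  rw [div_le_div_iff₀ hv hu]
  linarith

theorem exists_lagrangeMultiplier (hf : ConvexOn ℝ C f) (hg : ConvexOn ℝ C g)
    (hm : ∀ x ∈ C, g x ≤ b → m ≤ f x) (hslater : ∃ y ∈ C, g y < b) :
    ∃ l : ℝ, 0 ≤ l ∧ ∀ x ∈ C, m ≤ f x + l * (g x - b) := by
  let lower : Set ℝ := insert 0 ((fun x ↦ (m - f x) / (g x - b)) '' {x ∈ C | b < g x})
  let upper : Set ℝ := (fun y ↦ (f y - m) / (b - g y)) '' {y ∈ C | g y < b}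
  have hle : ∀ s ∈ lower, ∀ t ∈ upper, s ≤ t := by
    rintro s (rfl | ⟨x, ⟨hx, hgx⟩, rfl⟩) t ⟨y, ⟨hy, hgy⟩, rfl⟩
    · exact div_nonneg (sub_nonneg.2 (hm y hy hgy.le)) (sub_nonneg.2 hgy.le)
    · exact div_le_div_of_convexOn_of_forall_le hf hg hm hx hy hgx hgy
  obtain ⟨l, hlower, hupper⟩ :=
    exists_between_of_forall_le (Set.insert_nonempty _ _) (Set.Nonempty.image _ hslater) hle
  refine ⟨l, hlower (Set.mem_insert _ _), fun x hx ↦ ?_⟩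
  rcases lt_trichotomy (g x) b with hgx | hgx | hgx
  · have h := hupper ⟨x, ⟨hx, hgx⟩, rfl⟩
    rw [le_div_iff₀ (sub_pos.2 hgx)] at h
    linarith
  · simpa [hgx] using hm x hx hgx.le
  · have h := hlower (Set.mem_insert_of_mem _ ⟨x, ⟨hx, hgx⟩, rfl⟩)
    rw [div_le_iff₀ (sub_pos.2 hgx)] at h
    linarith

theorem exists_pos_isMinOn_mul_add_of_isMinOn (hf : ConvexOn ℝ C f) (hg : ConvexOn ℝ C g)
    {x₀ : E} (hgx₀ : g x₀ ≤ b) (hmin : IsMinOn f {x ∈ C | g x ≤ b} x₀)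
    (hslater : ∃ y ∈ C, g y < b) (hnotmin : ∃ z ∈ C, f z < f x₀) :
    ∃ τ : ℝ, 0 < τ ∧ IsMinOn (fun x ↦ τ * f x + g x) C x₀ := by
  obtain ⟨l, hl, hlagrange⟩ :=
    exists_lagrangeMultiplier hf hg (fun x hx hgx ↦ isMinOn_iff.1 hmin x ⟨hx, hgx⟩) hslater
  obtain ⟨z, hz, hfz⟩ := hnotmin
  have hl_pos : 0 < l := by
    refine hl.lt_of_ne' fun hl_zero ↦ hfz.not_ge ?_
    simpa [hl_zero] using hlagrange z hz
  refine ⟨l⁻¹, inv_pos.2 hl_pos, isMinOn_iff.2 fun x hx ↦ ?_⟩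
  calc l⁻¹ * f x₀ + g x₀ ≤ l⁻¹ * (f x + l * (g x - b)) + b := by
        gcongr
        exact hlagrange x hx
    _ = l⁻¹ * f x + g x := by
        field_simp
        ring

end LagrangeMultiplier

section NuclearNorm

variable {p q : ℕ}

theorem trace_cfc_eq_sum_eigenvalues {n 𝕜 : Type*} [RCLike 𝕜] [Fintype n] [DecidableEq n]
    {A : Matrix n n 𝕜} (hA : A.IsHermitian) (f : ℝ → ℝ) :
    (cfc f A).trace = ∑ i, (f (hA.eigenvalues i) : 𝕜) := by
  rw [hA.cfc_eq, Matrix.IsHermitian.cfc, Unitary.conjStarAlgAut_apply, Matrix.trace_mul_cycle,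
    Unitary.coe_star_mul_self, one_mul]
  simp [Matrix.trace_diagonal]

open scoped MatrixOrder in
theorem nucNorm_eq_trace_sqrt (M : Matrix (Fin p) (Fin q) ℝ) :
    nucNorm M = (CFC.sqrt (Mᴴ * M)).trace := by
  have hM := Matrix.posSemidef_conjTranspose_mul_self M
  rw [CFC.sqrt_eq_real_sqrt _ hM.nonneg, cfcₙ_eq_cfc, trace_cfc_eq_sum_eigenvalues hM.isHermitian]
  rfl

open scoped MatrixOrder in
theorem nucNorm_eq_trace_of_posSemidef {L : Matrix (Fin p) (Fin p) ℝ} (hL : L.PosSemidef) :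
    nucNorm L = L.trace := by
  rw [nucNorm_eq_trace_sqrt, hL.isHermitian.eq, CFC.sqrt_mul_self _ hL.nonneg]

open scoped MatrixOrder in
theorem nucNorm_eq_zero_iff {M : Matrix (Fin p) (Fin q) ℝ} : nucNorm M = 0 ↔ M = 0 := by
  rw [nucNorm_eq_trace_sqrt, (CFC.sqrt_nonneg _).posSemidef.trace_eq_zero_iff,
    CFC.sqrt_eq_zero_iff _ (Matrix.posSemidef_conjTranspose_mul_self M).nonneg,
    Matrix.conjTranspose_mul_self_eq_zero]

theorem nucNorm_nonneg (M : Matrix (Fin p) (Fin q) ℝ) : 0 ≤ nucNorm M :=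
  Finset.sum_nonneg fun _ _ ↦ Real.sqrt_nonneg _

theorem nucNorm_pos_iff {M : Matrix (Fin p) (Fin q) ℝ} : 0 < nucNorm M ↔ M ≠ 0 :=
  (nucNorm_nonneg M).lt_iff_ne'.trans nucNorm_eq_zero_iff.not

theorem convex_setOf_posSemidef {n : Type*} :
    Convex ℝ {L : Matrix n n ℝ | L.PosSemidef} :=
  fun _ hL _ hL' _ _ ha hb _ ↦ (hL.smul ha).add (hL'.smul hb)

theorem convexOn_nucNorm :
    ConvexOn ℝ {L : Matrix (Fin p) (Fin p) ℝ | L.PosSemidef} nucNorm :=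
  ((Matrix.traceLinearMap (Fin p) ℝ ℝ).convexOn convex_setOf_posSemidef).congr
    fun _ hL ↦ (nucNorm_eq_trace_of_posSemidef hL).symm

end NuclearNorm

section FrobeniusNorm

variable {p q : ℕ}

open scoped Matrix.Norms.Frobenius in
theorem frobNorm_eq_norm (M : Matrix (Fin p) (Fin q) ℝ) : frobNorm M = ‖M‖ := by
  simp [frobNorm, Matrix.frobenius_norm_def, Real.sqrt_eq_rpow]

open scoped Matrix.Norms.Frobenius in
theorem convexOn_frobNorm_sq :
    ConvexOn ℝ Set.univ fun M : Matrix (Fin p) (Fin q) ℝ ↦ frobNorm M ^ 2 := by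
  simpa only [frobNorm_eq_norm] using! convexOn_univ_norm.pow (fun _ _ ↦ norm_nonneg _) 2

theorem pdiag_eq_diagonal_diag (M : Matrix (Fin p) (Fin p) ℝ) :
    pdiag M = Matrix.diagonal M.diag := by
  ext i j
  rcases eq_or_ne i j with rfl | hij
  · simp [pdiag]
  · simp [pdiag, hij]

theorem frobNorm_poffdiag_le_frobNorm_sub (M : Matrix (Fin p) (Fin p) ℝ)
    {D : Matrix (Fin p) (Fin p) ℝ} (hD : D = pdiag D) :
    frobNorm (poffdiag M) ≤ frobNorm (M - D) := by
  refine Real.sqrt_le_sqrt (Finset.sum_le_sum fun i _ ↦ Finset.sum_le_sum fun j _ ↦ ?_)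
  rw [hD]
  by_cases hij : i = j
  · simpa [poffdiag, pdiag, hij] using sq_nonneg _
  · simp [poffdiag, pdiag, hij]

end FrobeniusNorm

section RMTFA

variable {p : ℕ}

/-- The set `S^p_+ × {diagonal matrices}` of pairs `(L, D)` over which both the constrained and the
penalized problem are posed. -/
def rmtfaDomain (p : ℕ) : Set (Matrix (Fin p) (Fin p) ℝ × Matrix (Fin p) (Fin p) ℝ) :=
  {L | L.PosSemidef} ×ˢ {D | D = pdiag D}

theorem convex_setOf_eq_pdiag : Convex ℝ {D : Matrix (Fin p) (Fin p) ℝ | D = pdiag D} := by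
  intro D hD D' hD' a b _ _ _
  rw [Set.mem_ofPred_eq, pdiag_eq_diagonal_diag] at hD hD' ⊢
  rw [hD, hD']
  simp [← Matrix.diagonal_smul]

theorem convex_rmtfaDomain : Convex ℝ (rmtfaDomain p) :=
  convex_setOf_posSemidef.prod convex_setOf_eq_pdiag

theorem convexOn_nucNorm_fst : ConvexOn ℝ (rmtfaDomain p) fun x ↦ nucNorm x.1 :=
  (convexOn_nucNorm.comp_linearMap (LinearMap.fst ℝ _ _)).subset (fun _ hx ↦ hx.1)
    convex_rmtfaDomain

theorem convexOn_frobNorm_sub_add_sq (S : Matrix (Fin p) (Fin p) ℝ) :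
    ConvexOn ℝ Set.univ fun x : Matrix (Fin p) (Fin p) ℝ × Matrix (Fin p) (Fin p) ℝ ↦
      frobNorm (S - (x.1 + x.2)) ^ 2 := by
  let residual : Matrix (Fin p) (Fin p) ℝ × Matrix (Fin p) (Fin p) ℝ →ᵃ[ℝ]
      Matrix (Fin p) (Fin p) ℝ :=
    AffineMap.const ℝ _ S - (LinearMap.fst ℝ _ _ + LinearMap.snd ℝ _ _).toAffineMap
  simpa [residual, Function.comp_def] using convexOn_frobNorm_sq.comp_affineMap residual

theorem isRMTFAMin_iff_isMinOn {τ : ℝ} {S L D : Matrix (Fin p) (Fin p) ℝ} :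
    IsRMTFAMin τ S L D ↔ (L, D) ∈ rmtfaDomain p ∧
      IsMinOn (fun x ↦ objF τ S x.1 x.2) (rmtfaDomain p) (L, D) := by
  simp [IsRMTFAMin, rmtfaDomain, isMinOn_iff, and_assoc]

open scoped MatrixOrder in
theorem exists_posSemidef_add_diagonal_eq {S : Matrix (Fin p) (Fin p) ℝ} (hS : S.IsHermitian) :
    ∃ L D : Matrix (Fin p) (Fin p) ℝ, L.PosSemidef ∧ D = pdiag D ∧ L + D = S := by
  obtain ⟨c, hc⟩ := (Matrix.finite_real_spectrum (A := S)).bddBelow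
  refine ⟨S - algebraMap ℝ _ c, algebraMap ℝ _ c, ?_, ?_, sub_add_cancel _ _⟩
  · exact Matrix.le_iff.1 (algebraMap_le_of_le_spectrum hc hS.isSelfAdjoint)
  · simp [pdiag_eq_diagonal_diag, Matrix.algebraMap_eq_diagonal]

theorem constrained_min_is_rmtfa_min_general {S : Matrix (Fin p) (Fin p) ℝ} {ψ : ℝ}
    (hslater : ∃ L D : Matrix (Fin p) (Fin p) ℝ, L.PosSemidef ∧ D = pdiag D ∧
      frobNorm (S - (L + D)) ^ 2 < ψ)
    (hψ : ψ < frobNorm (poffdiag S) ^ 2) {Lhat Dhat : Matrix (Fin p) (Fin p) ℝ}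
    (hfeas : Lhat.PosSemidef ∧ Dhat = pdiag Dhat ∧ frobNorm (S - (Lhat + Dhat)) ^ 2 ≤ ψ)
    (hopt : ∀ L D : Matrix (Fin p) (Fin p) ℝ, L.PosSemidef → D = pdiag D →
      frobNorm (S - (L + D)) ^ 2 ≤ ψ → nucNorm Lhat ≤ nucNorm L) :
    ∃ τ : ℝ, 0 < τ ∧ IsRMTFAMin τ S Lhat Dhat := by
  obtain ⟨hL, hD, hres⟩ := hfeas
  obtain ⟨L₁, D₁, hL₁, hD₁, hlt⟩ := hslater
  have hLhat : Lhat ≠ 0 := by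
    rintro rfl
    rw [zero_add] at hres
    exact (pow_le_pow_left₀ (Real.sqrt_nonneg _) (frobNorm_poffdiag_le_frobNorm_sub S hD) 2).not_gt
      (hres.trans_lt hψ)
  have hzero : nucNorm (0 : Matrix (Fin p) (Fin p) ℝ) < nucNorm Lhat := by
    rwa [nucNorm_eq_zero_iff.2 rfl, nucNorm_pos_iff]
  have hfit : ConvexOn ℝ (rmtfaDomain p) fun x ↦ 1 / 2 * frobNorm (S - (x.1 + x.2)) ^ 2 :=
    ((convexOn_frobNorm_sub_add_sq S).subset (Set.subset_univ _) convex_rmtfaDomain).smul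
      one_half_pos.le
  have hmin : IsMinOn (fun x ↦ nucNorm x.1)
      {x ∈ rmtfaDomain p | 1 / 2 * frobNorm (S - (x.1 + x.2)) ^ 2 ≤ 1 / 2 * ψ} (Lhat, Dhat) :=
    isMinOn_iff.2 fun x ⟨hx, hxψ⟩ ↦ hopt x.1 x.2 hx.1 hx.2 (by linarith)
  obtain ⟨τ, hτ, hτmin⟩ := exists_pos_isMinOn_mul_add_of_isMinOn convexOn_nucNorm_fst hfit
    (by gcongr) hmin ⟨(L₁, D₁), ⟨hL₁, hD₁⟩, by gcongr⟩ ⟨(0, D₁), ⟨.zero, hD₁⟩, hzero⟩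
  exact ⟨τ, hτ, isRMTFAMin_iff_isMinOn.2 ⟨⟨hL, hD⟩, hτmin⟩⟩

end RMTFA

/-- if `0 < ψ < ‖poffdiag Σ‖_F²`, a global minimizer of the constrained
problem is a global minimizer of the penalized objective for some `τ > 0`. -/
theorem constrained_min_is_rmtfa_min (p : ℕ) (S : Matrix (Fin p) (Fin p) ℝ)
    (hS : S.IsHermitian) (ψ : ℝ) (hψ0 : 0 < ψ) (hψ1 : ψ < (frobNorm (poffdiag S)) ^ 2)
    (Lhat Dhat : Matrix (Fin p) (Fin p) ℝ)
    (hfeas : Lhat.PosSemidef ∧ Dhat = pdiag Dhat ∧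
      (frobNorm (S - (Lhat + Dhat))) ^ 2 ≤ ψ)
    (hopt : ∀ L D : Matrix (Fin p) (Fin p) ℝ, L.PosSemidef → D = pdiag D →
      (frobNorm (S - (L + D))) ^ 2 ≤ ψ → nucNorm Lhat ≤ nucNorm L) :
    ∃ τ : ℝ, 0 < τ ∧ IsRMTFAMin τ S Lhat Dhat := by
  obtain ⟨L, D, hL, hD, hLD⟩ := exists_posSemidef_add_diagonal_eq hS
  exact constrained_min_is_rmtfa_min_general ⟨L, D, hL, hD, by simpa [hLD, frobNorm] using hψ0⟩
    hψ1 hfeas hopt
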